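/- Let N ≥ 3, let V satisfy condition (V) and the decay condition that there exist A, α > 0 with V⁺(x) ≤ A|x|^{-2-α} for all x ∈ ℝ^N, let f satisfy conditions (f1), (f2), (f3), let λ > 0, and let u be a solution of problem (P_λ). Then there exists a constant C > 0 such that u(x) ≤ C|x|^{2-N} for all x ∈ ℝ^N, x ≠ 0. -/

import Mathlib

open MeasureTheory Filter Metric Set
open scoped ENNReal NNReal Topology

noncomputable section

/-- Euclidean space `ℝ^N`. -/
abbrev Euc (N : ℕ) := EuclideanSpace ℝ (Fin N)

/-- The Laplace operator on `ℝ^N`: the sum of the second partial derivatives. -/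
def lap (N : ℕ) (u : Euc N → ℝ) (x : Euc N) : ℝ :=
  ∑ i : Fin N,
    fderiv ℝ (fun y => fderiv ℝ u y (EuclideanSpace.single i 1)) x (EuclideanSpace.single i 1)

/-- The principal eigenvalue `λ₁(R)`: the infimum of `∫_{B_R} |∇u|²` over smooth functions
compactly supported in the open ball `B_R` with `∫_{B_R} V u² = 1`. -/
def lam1 (N : ℕ) (V : Euc N → ℝ) (R : ℝ) : ℝ :=
  sInf { t : ℝ | ∃ u : Euc N → ℝ, ContDiff ℝ (⊤ : ℕ∞) u ∧ HasCompactSupport u ∧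
    tsupport u ⊆ ball (0 : Euc N) R ∧
    (∫ x, V x * u x ^ 2) = 1 ∧ t = ∫ x, ‖gradient u x‖ ^ 2 }

/-- `Λ := lim_{R → ∞} λ₁(R)`. -/
def Lam (N : ℕ) (V : Euc N → ℝ) : ℝ := limUnder atTop (lam1 N V)

/-- Condition (V): `V` is a bounded Hölder-continuous function whose positive part
`V⁺ = max(V, 0)` is nontrivial and decomposes as `V₁ + V₂` with `V₁ ∈ L^{N/2}` and
`|x|² V₂(x) → 0` as `|x| → ∞`. -/
def CondV (N : ℕ) (V V₁ V₂ : Euc N → ℝ) : Prop :=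
  (∃ C β : ℝ≥0, 0 < β ∧ β ≤ 1 ∧ HolderWith C β V) ∧
  (∃ C : ℝ, ∀ x, |V x| ≤ C) ∧
  (∃ x, 0 < V x) ∧
  (∀ x, max (V x) 0 = V₁ x + V₂ x) ∧
  MemLp V₁ ((N : ℝ≥0∞) / 2) volume ∧
  Tendsto (fun x : Euc N => ‖x‖ ^ 2 * V₂ x) (cocompact _) (𝓝 0)

/-- The decay condition: `V⁺(x) ≤ A |x|^{-2-α}`. -/
def CondVDecay (N : ℕ) (V : Euc N → ℝ) : Prop :=
  ∃ A α : ℝ, 0 < A ∧ 0 < α ∧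
    ∀ x : Euc N, x ≠ 0 → max (V x) 0 ≤ A * ‖x‖ ^ (-2 - α)

/-- Conditions (f1), (f2), (f3) on the absorption term `f`. -/
def CondF (N : ℕ) (V : Euc N → ℝ) (f : ℝ → ℝ) : Prop :=
  ContDiff ℝ 1 f ∧ (∀ u : ℝ, 0 ≤ u → 0 ≤ f u) ∧
  -- (f1)
  f 0 = 0 ∧ deriv f 0 = 0 ∧
  0 < Filter.liminf (fun u : ℝ => ((deriv f u / u : ℝ) : EReal)) (𝓝[>] (0 : ℝ)) ∧
  -- (f2)
  StrictMonoOn (fun u : ℝ => f u / u) (Ioi 0) ∧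
  -- (f3)
  (∃ L : EReal, Tendsto (fun u : ℝ => ((f u / u : ℝ) : EReal)) atTop (𝓝 L) ∧
    ((⨆ x, |V x| : ℝ) : EReal) < L)

/-- A solution of problem `(P_λ)`: a positive `C²` function solving the logistic equation
and decaying to zero at infinity. -/
structure IsSolution (N : ℕ) (V : Euc N → ℝ) (f : ℝ → ℝ) (lam : ℝ) (u : Euc N → ℝ) : Prop where
  smooth : ContDiff ℝ 2 u
  pos : ∀ x, 0 < u x
  eqn : ∀ x, -lap N u x = lam * (V x * u x - f (u x))
  decay : Tendsto u (cocompact (Euc N)) (𝓝 0)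

/-- The surface integral `∫_{∂B_R} g dσ` over the sphere of radius `R`, written in polar
coordinates with respect to the canonical surface measure on the unit sphere. -/
def sphereInt (N : ℕ) (g : Euc N → ℝ) (R : ℝ) : ℝ :=
  ∫ ω : sphere (0 : Euc N) 1, g (R • (ω : Euc N)) * R ^ (N - 1)
    ∂((volume : Measure (Euc N)).toSphere)

/-
A positive `C²` function `w` with `-Δw > c w` obeys a maximum principle: where the quotient `u / w`
of a subsolution by `w` has an interior maximum `T > 0`, the function `u - T w` has a local maximum,
which contradicts `-Δ(u - T w) < 0`.

If `r ^ p` is harmonic, that is `p = 0` or `p = 2 - n`, then `r ^ p - k r ^ (p - β)` is such a `w`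
for the potential `c = a r ^ (-2 - α)` near infinity, for a suitable `k` and small `β`. Comparing
`u` with `C s + η h`, where `s` is the `w` with `p = 2 - n` and `h` the one with `p = 0`, needs no
rate of decay of `u`, because `h` is bounded below; letting `η → 0` gives `u ≤ C s`.
-/

section SecondDerivativeTest

theorem deriv_deriv_nonpos_of_isLocalMax {φ : ℝ → ℝ} {t₀ : ℝ} (hφ : ContinuousAt φ t₀)
    (hmax : IsLocalMax φ t₀) : deriv (deriv φ) t₀ ≤ 0 := by
  by_contra! hpos
  have hmin : IsLocalMin φ t₀ := isLocalMin_of_deriv_deriv_pos hpos hmax.deriv_eq_zero hφ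
  have hconst : φ =ᶠ[𝓝 t₀] fun _ => φ t₀ := by
    filter_upwards [hmax, hmin] with t hle hge using le_antisymm hle hge
  have hderiv : deriv φ =ᶠ[𝓝 t₀] fun _ => 0 := by simpa using hconst.deriv
  simp [hderiv.deriv_eq] at hpos

variable {E : Type*} [NormedAddCommGroup E] [NormedSpace ℝ E] {f : E → ℝ} {x : E}

theorem deriv_deriv_comp_line (hf : ContDiffAt ℝ 2 f x) (v : E) :
    deriv (deriv fun t : ℝ => f (x + t • v)) 0 = fderiv ℝ (fderiv ℝ f) x v v := by
  have hline (t : ℝ) : HasDerivAt (fun t : ℝ => x + t • v) v t := by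
    simpa using ((hasDerivAt_id t).smul_const v).const_add x
  have hline₀ : Tendsto (fun t : ℝ => x + t • v) (𝓝 0) (𝓝 x) := by
    simpa using (hline 0).continuousAt.tendsto
  have hderiv : (deriv fun t : ℝ => f (x + t • v)) =ᶠ[𝓝 0] fun t => fderiv ℝ f (x + t • v) v := by
    filter_upwards [hline₀.eventually (hf.eventually (by simp))] with t ht
    exact ((ht.differentiableAt (by simp)).hasFDerivAt.comp_hasDerivAt t (hline t)).deriv
  have hfderiv : DifferentiableAt ℝ (fderiv ℝ f) x :=
    (hf.fderiv_right (m := 1) (by norm_num)).differentiableAt (by simp)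
  have hsecond := (hfderiv.hasFDerivAt.clm_apply (hasFDerivAt_const v x)).hasLineDerivAt v
  rw [hderiv.deriv_eq]
  exact hsecond.lineDeriv.trans (by simp)

theorem fderiv_fderiv_nonpos_of_isLocalMax (hf : ContDiffAt ℝ 2 f x) (hmax : IsLocalMax f x)
    (v : E) : fderiv ℝ (fderiv ℝ f) x v v ≤ 0 := by
  have hline : ContinuousAt (fun t : ℝ => x + t • v) 0 := by fun_prop
  rw [← deriv_deriv_comp_line hf v]
  apply deriv_deriv_nonpos_of_isLocalMax
  · exact ContinuousAt.comp (by simpa using hf.continuousAt) hline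
  · exact IsLocalMax.comp_continuous (g := fun t : ℝ => x + t • v) (by simpa using hmax) hline

end SecondDerivativeTest

section NormRpowAtInfinity

theorem exists_exponent_mul_ne_zero (p q : ℝ) {α : ℝ} (hα : 0 < α) :
    ∃ β, 0 < β ∧ β ≤ α ∧ (p - β) * (q - β) ≠ 0 := by
  obtain ⟨β, ⟨hβ, hβα⟩, hβpq⟩ := ((Ioc_infinite hα).sdiff (toFinite {p, q})).nonempty
  simp only [mem_insert_iff, mem_singleton_iff, not_or] at hβpq
  exact ⟨β, hβ, hβα, mul_ne_zero (sub_ne_zero.mpr (Ne.symm hβpq.1))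
    (sub_ne_zero.mpr (Ne.symm hβpq.2))⟩

theorem exists_pos_forall_le_mul {X : Type*} [TopologicalSpace X] {K : Set X} {u s : X → ℝ}
    (hK : IsCompact K) (hu : ContinuousOn u K) (hs : ContinuousOn s K) (hs_pos : ∀ x ∈ K, 0 < s x) :
    ∃ C > 0, ∀ x ∈ K, u x ≤ C * s x := by
  obtain ⟨C, hC⟩ := hK.exists_bound_of_continuousOn (hu.div hs fun x hx => (hs_pos x hx).ne')
  refine ⟨max C 1, by positivity, fun x hx => (div_le_iff₀ (hs_pos x hx)).mp ?_⟩
  exact (le_abs_self _).trans ((hC x hx).trans (le_max_left C 1))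

variable {E : Type*} [NormedAddCommGroup E] [ProperSpace E]

theorem exists_pos_forall_of_eventually_cocompact {P : E → Prop} (hP : ∀ᶠ x in cocompact E, P x) :
    ∃ R > 0, ∀ x, R ≤ ‖x‖ → P x := by
  rw [← cobounded_eq_cocompact, hasBasis_cobounded_norm.eventually_iff] at hP
  obtain ⟨R, -, hR⟩ := hP
  exact ⟨max R 1, by positivity, fun x hx => hR ((le_max_left R 1).trans hx)⟩

theorem eventually_abs_mul_norm_rpow_sub_le (p k : ℝ) {β ε : ℝ} (hβ : 0 < β) (hε : 0 < ε) :
    ∀ᶠ x : E in cocompact E, |k * ‖x‖ ^ (p - β)| ≤ ε * ‖x‖ ^ p := by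
  have htendsto : Tendsto (fun r : ℝ => |k| * r ^ (-β)) atTop (𝓝 0) := by
    simpa using (tendsto_rpow_neg_atTop hβ).const_mul |k|
  filter_upwards [tendsto_norm_cocompact_atTop.eventually (htendsto.eventually_le_const hε),
    tendsto_norm_cocompact_atTop.eventually_gt_atTop (0 : ℝ)] with x hsmall hx
  calc |k * ‖x‖ ^ (p - β)| = |k| * ‖x‖ ^ (-β) * ‖x‖ ^ p := by
        rw [abs_mul, Real.abs_rpow_of_nonneg hx.le, abs_norm, mul_assoc, ← Real.rpow_add hx,
          neg_add_eq_sub]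
    _ ≤ ε * ‖x‖ ^ p := by gcongr

theorem exists_forall_le_mul_norm_rpow {u : E → ℝ} {p : ℝ} (hu : Continuous u) (hp : p ≤ 0)
    (hle : ∃ C : ℝ, ∀ᶠ x in cocompact E, u x ≤ C * ‖x‖ ^ p) :
    ∃ C : ℝ, 0 < C ∧ ∀ x ≠ 0, u x ≤ C * ‖x‖ ^ p := by
  obtain ⟨C, hC⟩ := hle
  obtain ⟨R, hR, hout⟩ := exists_pos_forall_of_eventually_cocompact hC
  have hRp : 0 < R ^ p := Real.rpow_pos_of_pos hR p
  obtain ⟨M, hM, hin⟩ := exists_pos_forall_le_mul (isCompact_closedBall (0 : E) R)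
    hu.continuousOn continuousOn_const fun _ _ => hRp
  refine ⟨max C M, lt_max_of_lt_right hM, fun x hx => ?_⟩
  have hr : 0 < ‖x‖ := norm_pos_iff.mpr hx
  rcases le_total R ‖x‖ with hRx | hxR
  · refine (hout x hRx).trans ?_
    gcongr
    exact le_max_left C M
  · refine (hin x (mem_closedBall_zero_iff.mpr hxR)).trans ?_
    gcongr ?_ * ?_
    · exact le_max_right C M
    · exact Real.rpow_le_rpow_of_nonpos hr hxR hp

end NormRpowAtInfinity

section Comparison

open InnerProductSpace Laplacian Module

variable {E : Type*} [NormedAddCommGroup E] [InnerProductSpace ℝ E]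

theorem hasFDerivAt_norm_rpow_of_ne_zero (p : ℝ) {x : E} (hx : x ≠ 0) :
    HasFDerivAt (fun y : E => ‖y‖ ^ p) ((p * ‖x‖ ^ (p - 2)) • innerSL ℝ x) x := by
  have hsq := (hasStrictFDerivAt_norm_sq x).hasFDerivAt.rpow_const (p := p / 2)
    (.inl (by positivity))
  have hpow (y : E) (q : ℝ) : (‖y‖ ^ 2) ^ (q / 2) = ‖y‖ ^ q := by
    rw [← Real.rpow_natCast_mul (norm_nonneg y)]
    congr 1
    push_cast
    ring
  simp only [hpow] at hsq
  convert hsq using 1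
  rw [show p / 2 - 1 = (p - 2) / 2 by ring, hpow]
  module

theorem contDiffAt_norm_rpow (p : ℝ) {x : E} (hx : x ≠ 0) :
    ContDiffAt ℝ 2 (fun y : E => ‖y‖ ^ p) x :=
  (contDiffAt_norm ℝ hx).rpow_const_of_ne (norm_ne_zero_iff.mpr hx)

theorem fderiv_fderiv_norm_rpow (p : ℝ) {x : E} (hx : x ≠ 0) (v : E) :
    fderiv ℝ (fderiv ℝ fun y : E => ‖y‖ ^ p) x v v =
      p * ‖x‖ ^ (p - 2) * ‖v‖ ^ 2 + p * (p - 2) * ‖x‖ ^ (p - 4) * inner ℝ x v ^ 2 := by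
  have hfderiv : (fderiv ℝ fun y : E => ‖y‖ ^ p) =ᶠ[𝓝 x]
      fun y => (p * ‖y‖ ^ (p - 2)) • innerSL ℝ y := by
    filter_upwards [isOpen_ne.mem_nhds hx] with y hy
    exact (hasFDerivAt_norm_rpow_of_ne_zero p hy).fderiv
  have hsecond := ((hasFDerivAt_norm_rpow_of_ne_zero (p - 2) hx).const_mul p).smul
    (innerSL ℝ : E →L[ℝ] E →L[ℝ] ℝ).hasFDerivAt
  have hinner (y z : E) : (innerSL ℝ : E →L[ℝ] E →L[ℝ] ℝ) y z = inner ℝ y z := rfl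
  rw [hfderiv.fderiv_eq]
  refine (congr($(hsecond.fderiv) v v)).trans ?_
  simp [hinner]
  ring_nf

variable [FiniteDimensional ℝ E]

theorem laplacian_eq_sum_fderiv_fderiv {ι : Type*} [Fintype ι] (b : OrthonormalBasis ι ℝ E)
    (f : E → ℝ) (x : E) : Δ f x = ∑ i, fderiv ℝ (fderiv ℝ f) x (b i) (b i) := by
  simp [laplacian_eq_iteratedFDeriv_orthonormalBasis f b, iteratedFDeriv_two_apply]

theorem laplacian_nonpos_of_isLocalMax {f : E → ℝ} {x : E} (hf : ContDiffAt ℝ 2 f x)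
    (hmax : IsLocalMax f x) : Δ f x ≤ 0 := by
  rw [laplacian_eq_sum_fderiv_fderiv (stdOrthonormalBasis ℝ E)]
  exact Finset.sum_nonpos fun i _ => fderiv_fderiv_nonpos_of_isLocalMax hf hmax _

theorem laplacian_norm_rpow (p : ℝ) {x : E} (hx : x ≠ 0) :
    Δ (fun y : E => ‖y‖ ^ p) x = p * (p - 2 + finrank ℝ E) * ‖x‖ ^ (p - 2) := by
  have hpow : ‖x‖ ^ (p - 4) * ‖x‖ ^ 2 = ‖x‖ ^ (p - 2) := by
    rw [← Real.rpow_add_natCast (norm_ne_zero_iff.mpr hx)]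
    congr 1
    push_cast
    ring
  let b := stdOrthonormalBasis ℝ E
  calc Δ (fun y : E => ‖y‖ ^ p) x
      = ∑ i, (p * ‖x‖ ^ (p - 2) + p * (p - 2) * ‖x‖ ^ (p - 4) * inner ℝ x (b i) ^ 2) := by
        simp [laplacian_eq_sum_fderiv_fderiv b, fderiv_fderiv_norm_rpow p hx]
    _ = finrank ℝ E * (p * ‖x‖ ^ (p - 2)) + p * (p - 2) * ‖x‖ ^ (p - 4) * ‖x‖ ^ 2 := by
        rw [Finset.sum_add_distrib, ← Finset.mul_sum _ _ (p * (p - 2) * ‖x‖ ^ (p - 4)),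
          b.sum_sq_inner_left]
        simp
    _ = p * (p - 2 + finrank ℝ E) * ‖x‖ ^ (p - 2) := by
        rw [mul_assoc _ (‖x‖ ^ (p - 4)), hpow]
        ring

/-- `u` is a classical subsolution of `-Δu = c u` at the point `x`. -/
structure IsSubsolutionAt (c u : E → ℝ) (x : E) : Prop where
  contDiffAt : ContDiffAt ℝ 2 u x
  neg_laplacian_le : -Δ u x ≤ c x * u x

/-- `w` is a classical strict supersolution of `-Δw = c w` at the point `x`. -/
structure IsStrictSupersolutionAt (c w : E → ℝ) (x : E) : Prop where
  contDiffAt : ContDiffAt ℝ 2 w x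
  lt_neg_laplacian : c x * w x < -Δ w x

namespace IsStrictSupersolutionAt

variable {c s h : E → ℝ} {x : E}

theorem add (hs : IsStrictSupersolutionAt c s x) (hh : IsStrictSupersolutionAt c h x) :
    IsStrictSupersolutionAt c (s + h) x where
  contDiffAt := hs.contDiffAt.add hh.contDiffAt
  lt_neg_laplacian := by
    rw [hs.contDiffAt.laplacian_add hh.contDiffAt, Pi.add_apply]
    linarith [hs.lt_neg_laplacian, hh.lt_neg_laplacian]

theorem smul (hs : IsStrictSupersolutionAt c s x) {η : ℝ} (hη : 0 < η) :
    IsStrictSupersolutionAt c (η • s) x where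
  contDiffAt := hs.contDiffAt.const_smul η
  lt_neg_laplacian := by
    rw [laplacian_smul η hs.contDiffAt, Pi.smul_apply, smul_eq_mul, smul_eq_mul]
    linarith [mul_lt_mul_of_pos_left hs.lt_neg_laplacian hη]

end IsStrictSupersolutionAt

theorem not_isLocalMax_sub_smul {c u w : E → ℝ} {x : E} {T : ℝ} (hT : 0 < T)
    (hu : IsSubsolutionAt c u x) (hw : IsStrictSupersolutionAt c w x) (hTx : u x = T * w x) :
    ¬IsLocalMax (u - T • w) x := by
  intro hmax
  have hTw := hw.smul hT
  have hnonpos : Δ (u - T • w) x ≤ 0 :=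
    laplacian_nonpos_of_isLocalMax (hu.contDiffAt.sub hTw.contDiffAt) hmax
  rw [hu.contDiffAt.laplacian_sub hTw.contDiffAt] at hnonpos
  have hlt : c x * u x < -Δ (T • w) x := by
    simpa only [Pi.smul_apply, smul_eq_mul, ← hTx] using hTw.lt_neg_laplacian
  linarith [hu.neg_laplacian_le]

theorem le_of_strictSupersolution {F : Set E} {c u w : E → ℝ} (hF : IsClosed F)
    (hu : ContinuousOn u F) (hw : ContinuousOn w F) (hw_pos : ∀ x ∈ F, 0 < w x)
    (hu_sub : ∀ x ∈ interior F, IsSubsolutionAt c u x)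
    (hw_super : ∀ x ∈ interior F, IsStrictSupersolutionAt c w x)
    (h_frontier : ∀ x ∈ frontier F, u x ≤ w x)
    (h_infty : ∀ᶠ x in cocompact E ⊓ 𝓟 F, u x ≤ w x) :
    ∀ x ∈ F, u x ≤ w x := by
  by_contra! ⟨x₁, hx₁, hlt⟩
  have hquot₁ : 1 < u x₁ / w x₁ := (one_lt_div (hw_pos x₁ hx₁)).mpr hlt
  obtain ⟨x₀, hx₀, hmax⟩ : ∃ x₀ ∈ F, IsMaxOn (fun x => u x / w x) F x₀ := by
    refine (hu.div hw fun x hx => (hw_pos x hx).ne').exists_isMaxOn' hF hx₁ ?_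
    filter_upwards [h_infty, mem_inf_of_right (mem_principal_self F)] with x hle hx
    exact ((div_le_one (hw_pos x hx)).mpr hle).trans hquot₁.le
  set T : ℝ := u x₀ / w x₀
  have hT : 1 < T := hquot₁.trans_le (hmax hx₁)
  have hTx₀ : u x₀ = T * w x₀ := (div_mul_cancel₀ _ (hw_pos x₀ hx₀).ne').symm
  have hle (x) (hx : x ∈ F) : u x ≤ T * w x := (div_le_iff₀ (hw_pos x hx)).mp (hmax hx)
  have hx₀_int : x₀ ∈ interior F := by
    by_contra hnot
    have := h_frontier x₀ ⟨subset_closure hx₀, hnot⟩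
    exact this.not_gt ((one_lt_div (hw_pos x₀ hx₀)).mp hT)
  refine not_isLocalMax_sub_smul (zero_lt_one.trans hT) (hu_sub x₀ hx₀_int) (hw_super x₀ hx₀_int)
    hTx₀ ?_
  filter_upwards [mem_interior_iff_mem_nhds.mp hx₀_int] with x hx
  simpa [← hTx₀] using hle x hx

theorem le_of_strictSupersolution_of_eventually_le_mul {F : Set E} {c u s h : E → ℝ}
    (hF : IsClosed F) (hu : ContinuousOn u F) (hs : ContinuousOn s F) (hh : ContinuousOn h F)
    (hs_nonneg : ∀ x ∈ F, 0 ≤ s x) (hh_pos : ∀ x ∈ F, 0 < h x)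
    (hu_sub : ∀ x ∈ interior F, IsSubsolutionAt c u x)
    (hs_super : ∀ x ∈ interior F, IsStrictSupersolutionAt c s x)
    (hh_super : ∀ x ∈ interior F, IsStrictSupersolutionAt c h x)
    (h_frontier : ∀ x ∈ frontier F, u x ≤ s x)
    (h_infty : ∀ η > 0, ∀ᶠ x in cocompact E ⊓ 𝓟 F, u x ≤ η * h x) :
    ∀ x ∈ F, u x ≤ s x := by
  have hperturbed (η : ℝ) (hη : 0 < η) : ∀ x ∈ F, u x ≤ (s + η • h) x := by
    have hηh (x) (hx : x ∈ F) : 0 < η * h x := mul_pos hη (hh_pos x hx)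
    refine le_of_strictSupersolution hF hu (hs.add (hh.const_smul η))
      (fun x hx => add_pos_of_nonneg_of_pos (hs_nonneg x hx) (hηh x hx)) hu_sub
      (fun x hx => (hs_super x hx).add ((hh_super x hx).smul hη)) (fun x hx => ?_) ?_
    · exact (h_frontier x hx).trans (le_add_of_nonneg_right (hηh x (hF.frontier_subset hx)).le)
    · filter_upwards [h_infty η hη, mem_inf_of_right (mem_principal_self F)] with x hle hx
      exact hle.trans (le_add_of_nonneg_left (hs_nonneg x hx))
  intro x hx
  refine le_of_forall_pos_le_add fun ε hε => ?_
  simpa [div_mul_cancel₀ ε (hh_pos x hx).ne'] using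
    hperturbed (ε / h x) (div_pos hε (hh_pos x hx)) x hx

theorem laplacian_norm_rpow_sub {p q k : ℝ} (hp : p * (p - 2 + finrank ℝ E) = 0) {x : E}
    (hx : x ≠ 0) :
    Δ ((fun y : E => ‖y‖ ^ p) - k • (fun y : E => ‖y‖ ^ q)) x =
      -(k * (q * (q - 2 + finrank ℝ E)) * ‖x‖ ^ (q - 2)) := by
  have hq := contDiffAt_norm_rpow q hx
  have hkq : ContDiffAt ℝ 2 (k • fun y : E => ‖y‖ ^ q) x := hq.const_smul k
  rw [(contDiffAt_norm_rpow p hx).laplacian_sub hkq, laplacian_smul k hq,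
    laplacian_norm_rpow p hx, laplacian_norm_rpow q hx, hp, smul_eq_mul]
  ring

theorem exists_strictSupersolution_near_norm_rpow {p α : ℝ} (a : ℝ) (hα : 0 < α)
    (hp : p * (p - 2 + finrank ℝ E) = 0) :
    ∃ w : E → ℝ, ∀ᶠ x in cocompact E,
      IsStrictSupersolutionAt (fun y => a * ‖y‖ ^ (-2 - α)) w x ∧
        ‖x‖ ^ p / 2 ≤ w x ∧ w x ≤ 2 * ‖x‖ ^ p := by
  obtain ⟨β, hβ, hβα, hκ⟩ := exists_exponent_mul_ne_zero p (p - 2 + finrank ℝ E) hα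
  set κ : ℝ := (p - β) * (p - 2 + finrank ℝ E - β)
  set k : ℝ := (2 * |a| + 1) / κ
  refine ⟨(fun y => ‖y‖ ^ p) - k • fun y => ‖y‖ ^ (p - β), ?_⟩
  filter_upwards [eventually_abs_mul_norm_rpow_sub_le p k hβ one_half_pos,
    tendsto_norm_cocompact_atTop.eventually_ge_atTop (1 : ℝ)] with x hsmall hx
  have hx₀ : x ≠ 0 := norm_pos_iff.mp (zero_lt_one.trans_le hx)
  have hr : 0 < ‖x‖ := norm_pos_iff.mpr hx₀
  have hpow : 0 < ‖x‖ ^ p := Real.rpow_pos_of_pos hr p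
  obtain ⟨hlower, hupper⟩ := abs_le.mp hsmall
  simp only [Pi.sub_apply, Pi.smul_apply, smul_eq_mul]
  refine ⟨⟨?_, ?_⟩, by linarith, by linarith⟩
  · exact (contDiffAt_norm_rpow p hx₀).sub ((contDiffAt_norm_rpow (p - β) hx₀).const_smul k)
  have hkκ : k * ((p - β) * (p - β - 2 + finrank ℝ E)) = 2 * |a| + 1 := by
    rw [show p - β - 2 + finrank ℝ E = p - 2 + finrank ℝ E - β by ring]
    exact div_mul_cancel₀ _ hκ
  simp only [laplacian_norm_rpow_sub hp hx₀, hkκ, neg_neg, Pi.sub_apply, Pi.smul_apply, smul_eq_mul]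
  calc a * ‖x‖ ^ (-2 - α) * (‖x‖ ^ p - k * ‖x‖ ^ (p - β))
      ≤ |a| * ‖x‖ ^ (-2 - β) * (2 * ‖x‖ ^ p) := by
        gcongr
        · linarith
        · exact le_abs_self a
        · linarith
    _ = 2 * |a| * ‖x‖ ^ (p - β - 2) := by
        rw [show p - β - 2 = (-2 - β) + p by ring, Real.rpow_add hr]
        ring
    _ < (2 * |a| + 1) * ‖x‖ ^ (p - β - 2) := by
        gcongr
        exact lt_add_one _

theorem eventually_le_mul_of_strictSupersolution {c u s h : E → ℝ} {δ : ℝ} (hδ : 0 < δ)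
    (hu : ∀ᶠ x in cocompact E, IsSubsolutionAt c u x)
    (hs : ∀ᶠ x in cocompact E, IsStrictSupersolutionAt c s x ∧ 0 < s x)
    (hh : ∀ᶠ x in cocompact E, IsStrictSupersolutionAt c h x ∧ δ ≤ h x)
    (hu_zero : Tendsto u (cocompact E) (𝓝 0)) :
    ∃ C > 0, ∀ᶠ x in cocompact E, u x ≤ C * s x := by
  obtain ⟨R, -, hout⟩ := exists_pos_forall_of_eventually_cocompact (hu.and (hs.and hh))
  simp only [and_assoc] at hout
  choose hu_sub hs_super hs_pos hh_super hh_ge using hout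
  have hu_cont (x) (hx : R ≤ ‖x‖) : ContinuousAt u x := (hu_sub x hx).contDiffAt.continuousAt
  have hs_cont (x) (hx : R ≤ ‖x‖) : ContinuousAt s x := (hs_super x hx).contDiffAt.continuousAt
  have hsphere (x) (hx : x ∈ sphere (0 : E) R) : R ≤ ‖x‖ := (mem_sphere_zero_iff_norm.mp hx).ge
  have hinterior (x) (hx : x ∈ interior {y : E | R ≤ ‖y‖}) : R ≤ ‖x‖ :=
    interior_subset (s := {y : E | R ≤ ‖y‖}) hx
  obtain ⟨C, hC, hu_le⟩ := exists_pos_forall_le_mul (isCompact_sphere (0 : E) R)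
    (fun x hx => (hu_cont x (hsphere x hx)).continuousWithinAt)
    (fun x hx => (hs_cont x (hsphere x hx)).continuousWithinAt)
    fun x hx => hs_pos x (hsphere x hx)
  have hcomparison : ∀ x ∈ {x : E | R ≤ ‖x‖}, u x ≤ (C • s) x := by
    refine le_of_strictSupersolution_of_eventually_le_mul
      (isClosed_le continuous_const continuous_norm)
      (fun x hx => (hu_cont x hx).continuousWithinAt)
      (fun x hx => ((hs_cont x hx).const_smul C).continuousWithinAt)
      (fun x hx => (hh_super x hx).contDiffAt.continuousAt.continuousWithinAt)
      (fun x hx => (mul_pos hC (hs_pos x hx)).le) (fun x hx => hδ.trans_le (hh_ge x hx))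
      (fun x hx => hu_sub x (hinterior x hx))
      (fun x hx => (hs_super x (hinterior x hx)).smul hC)
      (fun x hx => hh_super x (hinterior x hx)) (fun x hx => ?_) fun η hη => ?_
    · exact hu_le x (mem_sphere_zero_iff_norm.mpr
        (frontier_le_subset_eq continuous_const continuous_norm hx).symm)
    · filter_upwards [(hu_zero.mono_left inf_le_left).eventually_le_const (mul_pos hη hδ),
        mem_inf_of_right (mem_principal_self _)] with x hux hx
      exact hux.trans (mul_le_mul_of_nonneg_left (hh_ge x hx) hη.le)
  exact ⟨C, hC, (tendsto_norm_cocompact_atTop.eventually_ge_atTop R).mono hcomparison⟩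

theorem eventually_le_mul_norm_rpow_of_subsolution {u : E → ℝ} {a α : ℝ} (hα : 0 < α)
    (hu : ∀ᶠ x in cocompact E, IsSubsolutionAt (fun y => a * ‖y‖ ^ (-2 - α)) u x)
    (hu_zero : Tendsto u (cocompact E) (𝓝 0)) :
    ∃ C : ℝ, ∀ᶠ x in cocompact E, u x ≤ C * ‖x‖ ^ ((2 : ℝ) - finrank ℝ E) := by
  obtain ⟨s, hs⟩ := exists_strictSupersolution_near_norm_rpow (E := E)
    (p := 2 - finrank ℝ E) a hα (by ring)
  obtain ⟨h, hh⟩ := exists_strictSupersolution_near_norm_rpow (E := E) (p := 0) a hα (by ring)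
  simp only [Real.rpow_zero] at hh
  have hs_pos : ∀ᶠ x in cocompact E, 0 < s x := by
    filter_upwards [hs, tendsto_norm_cocompact_atTop.eventually_gt_atTop (0 : ℝ)] with x hsx hx
    exact (half_pos (Real.rpow_pos_of_pos hx _)).trans_le hsx.2.1
  obtain ⟨C, hC, hle⟩ := eventually_le_mul_of_strictSupersolution one_half_pos hu
    ((hs.mono fun _ hx => hx.1).and hs_pos) (hh.mono fun _ hx => ⟨hx.1, hx.2.1⟩) hu_zero
  refine ⟨C * 2, ?_⟩
  filter_upwards [hle, hs] with x hux hsx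
  calc u x ≤ C * s x := hux
    _ ≤ C * (2 * ‖x‖ ^ ((2 : ℝ) - finrank ℝ E)) := by
      gcongr
      exact hsx.2.2
    _ = C * 2 * ‖x‖ ^ ((2 : ℝ) - finrank ℝ E) := (mul_assoc _ _ _).symm

theorem stmt8_general {u : E → ℝ} {a α : ℝ} (hdim : 2 ≤ finrank ℝ E) (hα : 0 < α)
    (hu : Continuous u) (hu_zero : Tendsto u (cocompact E) (𝓝 0))
    (hu_sub : ∀ᶠ x in cocompact E, IsSubsolutionAt (fun y => a * ‖y‖ ^ (-2 - α)) u x) :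
    ∃ C : ℝ, 0 < C ∧ ∀ x ≠ 0, u x ≤ C * ‖x‖ ^ ((2 : ℝ) - finrank ℝ E) :=
  exists_forall_le_mul_norm_rpow hu (sub_nonpos.mpr (by exact_mod_cast hdim))
    (eventually_le_mul_norm_rpow_of_subsolution hα hu_sub hu_zero)

end Comparison

open Laplacian in
theorem lap_eq_laplacian {N : ℕ} {u : Euc N → ℝ} {x : Euc N} (hu : ContDiffAt ℝ 2 u x) :
    lap N u x = Δ u x := by
  have hfderiv : DifferentiableAt ℝ (fderiv ℝ u) x :=
    (hu.fderiv_right (m := 1) (by norm_num)).differentiableAt (by simp)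
  rw [laplacian_eq_sum_fderiv_fderiv (EuclideanSpace.basisFun (Fin N) ℝ), lap]
  refine Finset.sum_congr rfl fun i _ => ?_
  rw [fderiv_clm_apply hfderiv (differentiableAt_const _)]
  simp

theorem CondVDecay.exists_eventually_le {N : ℕ} {V : Euc N → ℝ} (hV : CondVDecay N V) :
    ∃ A α : ℝ, 0 < α ∧ ∀ᶠ x in cocompact (Euc N), V x ≤ A * ‖x‖ ^ (-2 - α) := by
  obtain ⟨A, α, -, hα, hVA⟩ := hV
  refine ⟨A, α, hα, ?_⟩
  filter_upwards [isCompact_singleton.compl_mem_cocompact] with x hx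
  exact (le_max_left _ _).trans (hVA x hx)

theorem IsSolution.eventually_isSubsolutionAt {N : ℕ} {V : Euc N → ℝ} {f : ℝ → ℝ} {lam A p : ℝ}
    {u : Euc N → ℝ} (hu : IsSolution N V f lam u) (hlam : 0 ≤ lam) (hf : ∀ t, 0 ≤ t → 0 ≤ f t)
    (hV : ∀ᶠ x in cocompact (Euc N), V x ≤ A * ‖x‖ ^ p) :
    ∀ᶠ x in cocompact (Euc N), IsSubsolutionAt (fun y => lam * A * ‖y‖ ^ p) u x := by
  filter_upwards [hV] with x hVx
  refine ⟨hu.smooth.contDiffAt, ?_⟩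
  rw [← lap_eq_laplacian hu.smooth.contDiffAt, hu.eqn, mul_assoc lam, mul_assoc lam]
  have hux : 0 ≤ u x := (hu.pos x).le
  have hfux : 0 ≤ f (u x) := hf _ hux
  gcongr
  linarith [mul_le_mul_of_nonneg_right hVx hux]

/-- any solution of `(P_λ)` satisfies `u(x) ≤ C |x|^{2-N}`. -/
theorem stmt8 (N : ℕ) (hN : 3 ≤ N) (V V₁ V₂ : Euc N → ℝ)
    (hV : CondV N V V₁ V₂) (hdec : CondVDecay N V)
    (f : ℝ → ℝ) (hf : CondF N V f)
    (lam : ℝ) (hlam : 0 < lam)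
    (u : Euc N → ℝ) (hu : IsSolution N V f lam u) :
    ∃ C : ℝ, 0 < C ∧ ∀ x : Euc N, x ≠ 0 → u x ≤ C * ‖x‖ ^ ((2 : ℝ) - N) := by
  obtain ⟨A, α, hα, hVA⟩ := hdec.exists_eventually_le
  have hdim : 2 ≤ Module.finrank ℝ (Euc N) := by simpa using (Nat.le_succ 2).trans hN
  simpa using stmt8_general hdim hα hu.smooth.continuous hu.decay
    (hu.eventually_isSubsolutionAt hlam.le hf.2.1 hVA)

end
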